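/- Let S be a finite set of n ≥ 2 points in the plane in general position. Then every edge-labeled tree in ℒ(S) can be transformed into any other edge-labeled tree in ℒ(S) by a sequence of at most 11n − 22 rotations (with the label of each replaced edge transferred to its replacement). -/

import Mathlib

open scoped Classical

noncomputable section

/-- Points in the plane. -/
abbrev Pt : Type := ℝ × ℝ

/-- The closed straight-line segment spanned by an (unordered) edge. -/
def segOf (e : Sym2 Pt) : Set Pt :=
  Sym2.lift ⟨fun p q => segment ℝ p q, fun p q => segment_symm ℝ p q⟩ e

/-- The set of endpoints of an edge. -/
def epts (e : Sym2 Pt) : Set Pt := {p | p ∈ e}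

/-- Two edges intersect in at most common endpoints (they do not cross). -/
def NoCrossPair (e f : Sym2 Pt) : Prop := segOf e ∩ segOf f ⊆ epts e ∩ epts f

/-- A set of edges is noncrossing: any two distinct edges meet in at most a common endpoint. -/
def NoCross (E : Finset (Sym2 Pt)) : Prop := ∀ e ∈ E, ∀ f ∈ E, e ≠ f → NoCrossPair e f

/-- `E` is the edge set of a noncrossing straight-line spanning tree on the point set `S`:
all edges are nondegenerate with endpoints in `S`, pairwise noncrossing, there are
`|S| - 1` of them, and they connect all of `S`. -/
def IsPST (S : Finset Pt) (E : Finset (Sym2 Pt)) : Prop :=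
  (∀ e ∈ E, ¬ e.IsDiag ∧ ∀ p ∈ e, p ∈ S) ∧
  NoCross E ∧ E.card + 1 = S.card ∧
  ∀ p ∈ S, ∀ q ∈ S, Relation.ReflTransGen (fun a b => s(a, b) ∈ E) p q

/-- `S` is in general position: no three of its points are collinear. -/
def GenPos (S : Finset Pt) : Prop :=
  ∀ p ∈ S, ∀ q ∈ S, ∀ r ∈ S, p ≠ q → p ≠ r → q ≠ r → ¬ Collinear ℝ ({p, q, r} : Set Pt)

/-- `S` is in convex position: every point of `S` is a vertex of the convex hull of `S`. -/
def ConvexPos (S : Finset Pt) : Prop :=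
  ∀ p ∈ S, p ∉ convexHull ℝ ((S : Set Pt) \ {p})

/-- The open interior of the triangle with vertices `p`, `q`, `r`. -/
def triInt (p q r : Pt) : Set Pt := interior (convexHull ℝ ({p, q, r} : Set Pt))

/-- `y` can be reached from `x` by a sequence of at most `m` `step`-operations. -/
def ReachesIn {α : Type*} (step : α → α → Prop) (m : ℕ) (x y : α) : Prop :=
  ∃ k ≤ m, ∃ f : ℕ → α, f 0 = x ∧ f k = y ∧ ∀ i < k, step (f i) (f (i + 1))

/-- A simultaneous rotation from `E₁` to `E₂`: a bijection `π` between the removed and the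
inserted edges such that each `e` shares an endpoint with `π e` and `π e` crosses no edge
of `E₁`. -/
def SimRotation (S : Finset Pt) (E₁ E₂ : Finset (Sym2 Pt)) : Prop :=
  IsPST S E₁ ∧ IsPST S E₂ ∧ ∃ π : Sym2 Pt → Sym2 Pt,
    Set.BijOn π ↑(E₁ \ E₂) ↑(E₂ \ E₁) ∧
    ∀ e ∈ E₁ \ E₂, (∃ p, p ∈ e ∧ p ∈ π e) ∧ ∀ f ∈ E₁, NoCrossPair (π e) f

/-- An empty-triangle rotation replaces an edge `pq` by an adjacent edge `pr` such that
no edge of either tree meets the interior of the triangle `pqr`. -/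
def EmptyTriRot (S : Finset Pt) (E₁ E₂ : Finset (Sym2 Pt)) : Prop :=
  IsPST S E₁ ∧ IsPST S E₂ ∧ ∃ p q r : Pt,
    E₁ \ E₂ = {s(p, q)} ∧ E₂ \ E₁ = {s(p, r)} ∧
    ∀ g ∈ E₁ ∪ E₂, Disjoint (segOf g) (triInt p q r)

/-- A simultaneous empty-triangle rotation. -/
def SimEmptyTriRot (S : Finset Pt) (E₁ E₂ : Finset (Sym2 Pt)) : Prop :=
  IsPST S E₁ ∧ IsPST S E₂ ∧ ∃ π : Sym2 Pt → Sym2 Pt,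
    Set.BijOn π ↑(E₁ \ E₂) ↑(E₂ \ E₁) ∧
    ∀ e ∈ E₁ \ E₂, ∃ p q r : Pt, e = s(p, q) ∧ π e = s(p, r) ∧
      ∀ g ∈ E₁ ∪ E₂, Disjoint (segOf g) (triInt p q r)

/-- An edge slide replaces `pq` by `pr`, where `qr` is an edge of both trees and no edge of
either tree meets the interior of the triangle `pqr`. -/
def EdgeSlide (S : Finset Pt) (E₁ E₂ : Finset (Sym2 Pt)) : Prop :=
  IsPST S E₁ ∧ IsPST S E₂ ∧ ∃ p q r : Pt,
    E₁ \ E₂ = {s(p, q)} ∧ E₂ \ E₁ = {s(p, r)} ∧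
    s(q, r) ∈ E₁ ∧ s(q, r) ∈ E₂ ∧
    ∀ g ∈ E₁ ∪ E₂, Disjoint (segOf g) (triInt p q r)

/-- A simultaneous edge slide. -/
def SimEdgeSlide (S : Finset Pt) (E₁ E₂ : Finset (Sym2 Pt)) : Prop :=
  IsPST S E₁ ∧ IsPST S E₂ ∧ ∃ π : Sym2 Pt → Sym2 Pt,
    Set.BijOn π ↑(E₁ \ E₂) ↑(E₂ \ E₁) ∧
    ∀ e ∈ E₁ \ E₂, ∃ p q r : Pt, e = s(p, q) ∧ π e = s(p, r) ∧
      s(q, r) ∈ E₁ ∧ s(q, r) ∈ E₂ ∧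
      ∀ g ∈ E₁ ∪ E₂, Disjoint (segOf g) (triInt p q r)

/-- `e` is an edge of the convex hull of `S`: it joins two distinct points of `S` and its
segment lies on the boundary of the convex hull of `S`. -/
def IsHullEdge (S : Finset Pt) (e : Sym2 Pt) : Prop :=
  ∃ u v : Pt, e = s(u, v) ∧ u ∈ S ∧ v ∈ S ∧ u ≠ v ∧
    segment ℝ u v ⊆ frontier (convexHull ℝ (S : Set Pt))

/-- The spanning star centered at `v`. -/
def starAt (S : Finset Pt) (v : Pt) : Finset (Sym2 Pt) := (S.erase v).image (fun w => s(v, w))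

/-- An edge-labeled tree: an edge set together with a labeling function. -/
abbrev LTree := Finset (Sym2 Pt) × (Sym2 Pt → ℕ)

/-- `T` is an edge-labeled noncrossing straight-line spanning tree on `S`: its edge set is in
`𝒯(S)` and its labeling is a bijection from the edges onto `{1, …, |S| - 1}`
(normalized to `0` on non-edges). -/
def IsLabeledPST (S : Finset Pt) (T : LTree) : Prop :=
  IsPST S T.1 ∧ Set.BijOn T.2 ↑T.1 (Set.Icc 1 (S.card - 1)) ∧ ∀ e, e ∉ T.1 → T.2 e = 0

/-- A simultaneous exchange on edge-labeled trees: an arbitrary bijection between removed and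
inserted edges transferring labels, all common edges keeping their labels. -/
def LabSimExchange (S : Finset Pt) (T₁ T₂ : LTree) : Prop :=
  IsLabeledPST S T₁ ∧ IsLabeledPST S T₂ ∧ ∃ π : Sym2 Pt → Sym2 Pt,
    Set.BijOn π ↑(T₁.1 \ T₂.1) ↑(T₂.1 \ T₁.1) ∧
    (∀ e ∈ T₁.1 \ T₂.1, T₂.2 (π e) = T₁.2 e) ∧
    ∀ e ∈ T₁.1 ∩ T₂.1, T₂.2 e = T₁.2 e

/-- A rotation on edge-labeled trees: the removed and inserted edges share an endpoint and do
not cross, the label of the removed edge is transferred, and all other labels are kept. -/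
def LabRotation (S : Finset Pt) (T₁ T₂ : LTree) : Prop :=
  IsLabeledPST S T₁ ∧ IsLabeledPST S T₂ ∧ ∃ e₁ e₂ : Sym2 Pt,
    T₁.1 \ T₂.1 = {e₁} ∧ T₂.1 \ T₁.1 = {e₂} ∧
    (∃ p, p ∈ e₁ ∧ p ∈ e₂) ∧ NoCrossPair e₁ e₂ ∧
    T₂.2 e₂ = T₁.2 e₁ ∧ ∀ e ∈ T₁.1 ∩ T₂.1, T₂.2 e = T₁.2 e

/-- An edge slide on edge-labeled trees, transferring the label of the slid edge. -/
def LabEdgeSlide (S : Finset Pt) (T₁ T₂ : LTree) : Prop :=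
  IsLabeledPST S T₁ ∧ IsLabeledPST S T₂ ∧ ∃ p q r : Pt,
    T₁.1 \ T₂.1 = {s(p, q)} ∧ T₂.1 \ T₁.1 = {s(p, r)} ∧
    s(q, r) ∈ T₁.1 ∧ s(q, r) ∈ T₂.1 ∧
    (∀ g ∈ T₁.1 ∪ T₂.1, Disjoint (segOf g) (triInt p q r)) ∧
    T₂.2 (s(p, r)) = T₁.2 (s(p, q)) ∧ ∀ e ∈ T₁.1 ∩ T₂.1, T₂.2 e = T₁.2 e

/-! ### Coordinates seen from `v` -/

def Yc (v p : Pt) : ℝ := v.1 * (v.1 - p.1) + v.2 * (v.2 - p.2)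
def Xc (v p : Pt) : ℝ := v.1 * (p.2 - v.2) - v.2 * (p.1 - v.1)
def th (v p : Pt) : ℝ := Xc v p / Yc v p
def sv (v p : Pt) : ℝ := 1 / Yc v p
def Lf (v a b : Pt) (t : ℝ) : ℝ :=
  sv v a + (sv v b - sv v a) / (th v b - th v a) * (t - th v a)

lemma Yc_self (v : Pt) : Yc v v = 0 := by simp [Yc]

lemma pt_of_coords {v p q : Pt} (hp : 0 < Yc v p) (hx : Xc v p = Xc v q)
    (hy : Yc v p = Yc v q) : p = q := by
  have hN : v.1 ^ 2 + v.2 ^ 2 ≠ 0 := by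
    intro h
    have h1 : v.1 = 0 := by nlinarith [sq_nonneg v.1, sq_nonneg v.2]
    have h2 : v.2 = 0 := by nlinarith [sq_nonneg v.1, sq_nonneg v.2]
    simp [Yc, h1, h2] at hp
  simp only [Xc, Yc] at hx hy
  have e1 : (v.1 ^ 2 + v.2 ^ 2) * (p.1 - q.1) = 0 := by
    linear_combination (-v.1) * hy - v.2 * hx
  have e2 : (v.1 ^ 2 + v.2 ^ 2) * (p.2 - q.2) = 0 := by
    linear_combination v.1 * hx - v.2 * hy
  have e1' := (mul_eq_zero.mp e1).resolve_left hN
  have e2' := (mul_eq_zero.mp e2).resolve_left hN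
  exact Prod.ext (by linarith) (by linarith)

lemma pt_of_ths {v p q : Pt} (hp : 0 < Yc v p) (hq : 0 < Yc v q) (hx : th v p = th v q)
    (hy : sv v p = sv v q) : p = q := by
  have : Yc v p = Yc v q := by
    simp only [sv] at hy
    field_simp at hy
    linarith
  refine pt_of_coords hp ?_ this
  simp only [th] at hx
  rw [this] at hx
  field_simp at hx
  exact hx

lemma Yc_comb (v a b : Pt) (x y : ℝ) (h : x + y = 1) :
    Yc v (x • a + y • b) = x * Yc v a + y * Yc v b := by
  obtain rfl : x = 1 - y := by linarith
  simp [Yc]; ring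

lemma Xc_comb (v a b : Pt) (x y : ℝ) (h : x + y = 1) :
    Xc v (x • a + y • b) = x * Xc v a + y * Xc v b := by
  obtain rfl : x = 1 - y := by linarith
  simp [Xc]; ring

lemma Yc_pos_seg {v a b x : Pt} (ha : 0 < Yc v a) (hb : 0 < Yc v b) (hx : x ∈ segment ℝ a b) :
    0 < Yc v x := by
  obtain ⟨p, q, hp, hq, hpq, rfl⟩ := hx
  rw [Yc_comb _ _ _ _ _ hpq]
  rcases hp.eq_or_lt with h | h
  · have : q = 1 := by linarith
    subst this; simp [← h, hb]
  · have := mul_pos h ha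
    have := mul_nonneg hq hb.le
    linarith

lemma exists_on_seg {v a b : Pt} (ha : 0 < Yc v a) (hb : 0 < Yc v b)
    (hab : th v a < th v b) {t : ℝ} (h1 : th v a ≤ t) (h2 : t ≤ th v b) :
    ∃ x ∈ segment ℝ a b, th v x = t ∧ sv v x = Lf v a b t := by
  have hsa : 0 < sv v a := by unfold sv; positivity
  have hsb : 0 < sv v b := by unfold sv; positivity
  have hYa : Yc v a = 1 / sv v a := by unfold sv; field_simp
  have hYb : Yc v b = 1 / sv v b := by unfold sv; field_simp
  have hXa : Xc v a = th v a / sv v a := by unfold th sv; field_simp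
  have hXb : Xc v b = th v b / sv v b := by unfold th sv; field_simp
  have hd : 0 < th v b - th v a := by linarith
  obtain ⟨μ, hμ⟩ : ∃ μ, μ = (t - th v a) / (th v b - th v a) := ⟨_, rfl⟩
  have hμ0 : 0 ≤ μ := by rw [hμ]; apply div_nonneg <;> linarith
  have hμ1 : μ ≤ 1 := by rw [hμ, div_le_one hd]; linarith
  have ht : t = th v a + μ * (th v b - th v a) := by rw [hμ]; field_simp; ring
  have hL : Lf v a b t = (1 - μ) * sv v a + μ * sv v b := by
    unfold Lf; rw [hμ]; field_simp; ring
  have hs : 0 < (1 - μ) * sv v a + μ * sv v b := by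
    rcases hμ0.eq_or_lt with h | h
    · simp [← h, hsa]
    · have := mul_pos h hsb
      have := mul_nonneg (sub_nonneg.2 hμ1) hsa.le
      linarith
  obtain ⟨s, hs'⟩ : ∃ s, s = (1 - μ) * sv v a + μ * sv v b := ⟨_, rfl⟩
  rw [← hs'] at hs hL
  have hsum : (1 - μ) * sv v a / s + μ * sv v b / s = 1 := by
    field_simp; linarith
  refine ⟨((1 - μ) * sv v a / s) • a + (μ * sv v b / s) • b,
    ⟨_, _, ?_, ?_, hsum, rfl⟩, ?_, ?_⟩
  · have := sub_nonneg.2 hμ1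
    positivity
  · positivity
  · unfold th
    rw [Yc_comb _ _ _ _ _ hsum, Xc_comb _ _ _ _ _ hsum, hYa, hYb, hXa, hXb]
    have e1 : (1 - μ) * sv v a / s * (1 / sv v a) + μ * sv v b / s * (1 / sv v b) = 1 / s := by
      field_simp; ring
    have e2 : (1 - μ) * sv v a / s * (th v a / sv v a) + μ * sv v b / s * (th v b / sv v b)
        = t / s := by
      rw [ht]; field_simp; ring
    rw [e1, e2]; field_simp
  · have e1 : (1 - μ) * sv v a / s * (1 / sv v a) + μ * sv v b / s * (1 / sv v b) = 1 / s := by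
      field_simp; ring
    change 1 / Yc v (_ + _) = _
    rw [Yc_comb _ _ _ _ _ hsum]
    rw [hYa, hYb, e1, hL]; field_simp

lemma on_seg {v a b x : Pt} (ha : 0 < Yc v a) (hb : 0 < Yc v b)
    (hab : th v a < th v b) (hx : x ∈ segment ℝ a b) :
    th v a ≤ th v x ∧ th v x ≤ th v b ∧ sv v x = Lf v a b (th v x) := by
  have hpos := Yc_pos_seg ha hb hx
  obtain ⟨p, q, hp, hq, hpq, rfl⟩ := hx
  rw [Yc_comb _ _ _ _ _ hpq] at hpos
  have hd : 0 < th v b - th v a := by linarith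
  have hXa : Xc v a = th v a * Yc v a := by unfold th; field_simp
  have hXb : Xc v b = th v b * Yc v b := by unfold th; field_simp
  have e : th v (p • a + q • b) = (p * (th v a * Yc v a) + q * (th v b * Yc v b)) /
      (p * Yc v a + q * Yc v b) := by
    conv_lhs => unfold th
    rw [Yc_comb _ _ _ _ _ hpq, Xc_comb _ _ _ _ _ hpq, hXa, hXb]
  have e2 : sv v (p • a + q • b) = 1 / (p * Yc v a + q * Yc v b) := by
    conv_lhs => unfold sv
    rw [Yc_comb _ _ _ _ _ hpq]
  rw [e, e2]
  refine ⟨?_, ?_, ?_⟩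
  · rw [le_div_iff₀ hpos]
    have := mul_nonneg (mul_nonneg hq hb.le) hd.le
    linarith
  · rw [div_le_iff₀ hpos]
    have := mul_nonneg (mul_nonneg hp ha.le) hd.le
    linarith
  · unfold Lf sv
    obtain rfl : p = 1 - q := by linarith
    have hpos' := hpos.ne'
    have hd' := hd.ne'
    field_simp
    ring

lemma on_vseg {v b x : Pt} (hb : 0 < Yc v b) (hx : x ∈ segment ℝ v b) (hxv : x ≠ v) :
    0 < Yc v x ∧ th v x = th v b ∧ sv v b ≤ sv v x := by
  obtain ⟨p, q, hp, hq, hpq, rfl⟩ := hx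
  have hq' : 0 < q := by
    rcases hq.eq_or_lt with h | h
    · exfalso; apply hxv
      have : p = 1 := by linarith
      simp [← h, this]
    · exact h
  have hXv : Xc v v = 0 := by simp [Xc]
  have e1 : Yc v (p • v + q • b) = q * Yc v b := by
    rw [Yc_comb _ _ _ _ _ hpq, Yc_self]; ring
  have e2 : Xc v (p • v + q • b) = q * Xc v b := by
    rw [Xc_comb _ _ _ _ _ hpq, hXv]; ring
  refine ⟨?_, ?_, ?_⟩
  · rw [e1]; positivity
  · unfold th; rw [e1, e2]; field_simp
  · unfold sv; rw [e1]
    apply one_div_le_one_div_of_le (by positivity)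
    nlinarith

lemma Lf_left (v a b : Pt) : Lf v a b (th v a) = sv v a := by simp [Lf]
lemma Lf_right {v a b : Pt} (h : th v a < th v b) : Lf v a b (th v b) = sv v b := by
  have : th v b - th v a ≠ 0 := by linarith
  unfold Lf; field_simp; ring

/-- the good viewpoint -/
structure Good (S : Finset Pt) (v : Pt) : Prop where
  mem : v ∈ S
  pos : ∀ p ∈ S, p ≠ v → 0 < Yc v p
  inj : ∀ p ∈ S, p ≠ v → ∀ q ∈ S, q ≠ v → th v p = th v q → p = q
  gp : GenPos S

lemma exists_good (S : Finset Pt) (hS : S.Nonempty) (gp : GenPos S) : ∃ v, Good S v := by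
  obtain ⟨v, hv, hmax⟩ := S.exists_max_image (fun p => p.1 ^ 2 + p.2 ^ 2) hS
  have pos : ∀ p ∈ S, p ≠ v → 0 < Yc v p := by
    intro p hp hne
    have h1 := hmax p hp
    have h2 : 0 < (v.1 - p.1) ^ 2 + (v.2 - p.2) ^ 2 := by
      by_contra h
      apply hne
      have e1 : v.1 - p.1 = 0 := by nlinarith [sq_nonneg (v.1 - p.1), sq_nonneg (v.2 - p.2)]
      have e2 : v.2 - p.2 = 0 := by nlinarith [sq_nonneg (v.1 - p.1), sq_nonneg (v.2 - p.2)]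
      exact Prod.ext (by linarith) (by linarith)
    unfold Yc
    nlinarith
  refine ⟨v, hv, pos, ?_, gp⟩
  intro p hp hpv q hq hqv hth
  by_contra hpq
  refine gp v hv p hp q hq hpv.symm hqv.symm hpq ?_
  have hYp := pos p hp hpv
  have hYq := pos q hq hqv
  have key : q = (1 - Yc v q / Yc v p) • v + (Yc v q / Yc v p) • p := by
    apply pt_of_coords hYq
    · rw [Xc_comb _ _ _ _ _ (by ring)]
      have : Xc v v = 0 := by simp [Xc]
      rw [this]
      unfold th at hth
      field_simp at hth ⊢
      linarith
    · rw [Yc_comb _ _ _ _ _ (by ring), Yc_self]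
      field_simp; ring
  rw [collinear_iff_of_mem (p₀ := v) (by simp)]
  refine ⟨p - v, ?_⟩
  intro x hx
  simp only [Set.mem_insert_iff, Set.mem_singleton_iff] at hx
  rcases hx with rfl | rfl | rfl
  · exact ⟨0, by simp⟩
  · exact ⟨1, by simp⟩
  · refine ⟨Yc v x / Yc v p, ?_⟩
    conv_lhs => rw [key]
    simp only [vadd_eq_add, smul_sub, sub_smul, one_smul]
    abel

/-! ### Crossing lemmas -/

lemma Lf_affine (v a b : Pt) (t u : ℝ) :
    Lf v a b u = Lf v a b t + (sv v b - sv v a) / (th v b - th v a) * (u - t) := by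
  unfold Lf; ring

lemma ncp_symm {e f : Sym2 Pt} (h : NoCrossPair e f) : NoCrossPair f e := by
  unfold NoCrossPair at *
  rw [Set.inter_comm, Set.inter_comm (epts f)]
  exact h

lemma ncp_def {a b c d : Pt} (h : ∀ x ∈ segment ℝ a b, x ∈ segment ℝ c d →
    (x = a ∨ x = b) ∧ (x = c ∨ x = d)) : NoCrossPair s(a, b) s(c, d) := by
  rintro x ⟨h1, h2⟩
  have := h x h1 h2
  simpa [epts] using this

lemma ncp_elim {a b c d : Pt} (h : NoCrossPair s(a, b) s(c, d)) {x : Pt}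
    (h1 : x ∈ segment ℝ a b) (h2 : x ∈ segment ℝ c d) :
    (x = a ∨ x = b) ∧ (x = c ∨ x = d) := by
  have := h ⟨h1, h2⟩
  simpa [epts] using this

lemma cross_lemma {v a b c d : Pt} (ha : 0 < Yc v a) (hb : 0 < Yc v b) (hc : 0 < Yc v c)
    (hd : 0 < Yc v d) (hab : th v a < th v b) (hcd : th v c < th v d)
    (hnc : NoCrossPair s(a, b) s(c, d)) {t1 t2 : ℝ} (h1a : th v a ≤ t1) (h1c : th v c ≤ t1)
    (h12 : t1 < t2) (h2b : t2 ≤ th v b) (h2d : t2 ≤ th v d)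
    (h1 : Lf v a b t1 ≤ Lf v c d t1) (h2 : Lf v c d t2 < Lf v a b t2) : a = c := by
  obtain ⟨t, ht1, ht2, hte⟩ : ∃ t, t1 ≤ t ∧ t < t2 ∧ Lf v a b t = Lf v c d t := by
    have D2 : 0 < (Lf v a b t2 - Lf v c d t2) := by linarith
    have D1 : 0 ≤ (Lf v c d t1 - Lf v a b t1) := by linarith
    obtain ⟨r, hr⟩ : ∃ r, r = (Lf v c d t1 - Lf v a b t1) /
      ((Lf v c d t1 - Lf v a b t1) + (Lf v a b t2 - Lf v c d t2)) := ⟨_, rfl⟩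
    have D : 0 < (Lf v c d t1 - Lf v a b t1) + (Lf v a b t2 - Lf v c d t2) := by linarith
    have hr0 : 0 ≤ r := by rw [hr]; positivity
    have hr1 : r < 1 := by rw [hr, div_lt_one D]; linarith
    have hrr : r * ((Lf v c d t1 - Lf v a b t1) + (Lf v a b t2 - Lf v c d t2)) =
      (Lf v c d t1 - Lf v a b t1) := by rw [hr]; field_simp
    refine ⟨t1 + r * (t2 - t1), ?_, ?_, ?_⟩
    · nlinarith
    · nlinarith
    · rw [Lf_affine v a b t1, Lf_affine v c d t1]
      have e1 := Lf_affine v a b t1 t2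
      have e2 := Lf_affine v c d t1 t2
      rw [e1, e2] at hrr
      linear_combination hrr
  obtain ⟨x, hx, hxt, hxs⟩ := exists_on_seg ha hb hab (h1a.trans ht1) (ht2.le.trans h2b)
  obtain ⟨y, hy, hyt, hys⟩ := exists_on_seg hc hd hcd (h1c.trans ht1) (ht2.le.trans h2d)
  have hxy : x = y := pt_of_ths (Yc_pos_seg ha hb hx) (Yc_pos_seg hc hd hy)
    (hxt.trans hyt.symm) (by rw [hxs, hys, hte])
  subst hxy
  obtain ⟨h | h, h' | h'⟩ := ncp_elim hnc hx hy
  · exact h.symm.trans h'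
  · rw [h'] at hxt; linarith
  · rw [h] at hxt; linarith
  · rw [h] at hxt; linarith

lemma vseg_nc {S : Finset Pt} {v b c d : Pt} (G : Good S v) (hb : b ∈ S) (hc : c ∈ S) (hd : d ∈ S)
    (hbv : b ≠ v) (hcv : c ≠ v) (hdv : d ≠ v) (hcd : th v c < th v d)
    (h : ¬ (th v c < th v b ∧ th v b < th v d ∧ sv v b < Lf v c d (th v b))) :
    NoCrossPair s(v, b) s(c, d) := by
  apply ncp_def
  intro x hx1 hx2
  have hYb := G.pos b hb hbv
  have hYc := G.pos c hc hcv
  have hYd := G.pos d hd hdv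
  have hxp := Yc_pos_seg hYc hYd hx2
  have hxv : x ≠ v := by
    rintro rfl; rw [Yc_self] at hxp; exact lt_irrefl _ hxp
  obtain ⟨-, ht, hs⟩ := on_vseg hYb hx1 hxv
  obtain ⟨h1, h2, h3⟩ := on_seg hYc hYd hcd hx2
  rw [ht] at h1 h2 h3
  by_cases e1 : th v c = th v b
  · have : c = b := G.inj c hc hcv b hb hbv e1
    subst this
    have : x = c := pt_of_ths hxp hYc ht (by rw [h3, Lf_left])
    simp [this]
  by_cases e2 : th v b = th v d
  · have : b = d := G.inj b hb hbv d hd hdv e2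
    subst this
    have : x = b := pt_of_ths hxp hYb ht (by rw [h3, Lf_right hcd])
    simp [this]
  have h1' := lt_of_le_of_ne h1 e1
  have h2' := lt_of_le_of_ne h2 e2
  have h4 : ¬ (sv v b < Lf v c d (th v b)) := fun h' => h ⟨h1', h2', h'⟩
  have hxb : x = b := pt_of_ths hxp hYb ht (by linarith)
  subst hxb
  exfalso
  refine G.gp c hc x hb d hd ?_ ?_ ?_ ?_
  · rintro rfl; exact e1 rfl
  · rintro rfl; exact lt_irrefl _ hcd
  · rintro rfl; exact e2 rfl
  · exact (mem_segment_iff_wbtw.mp hx2).collinear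

lemma vv_nc {S : Finset Pt} {v b d : Pt} (G : Good S v) (hb : b ∈ S) (hd : d ∈ S)
    (hbv : b ≠ v) (hdv : d ≠ v) (hbd : b ≠ d) : NoCrossPair s(v, b) s(v, d) := by
  apply ncp_def
  intro x hx1 hx2
  by_cases hxv : x = v
  · simp [hxv]
  exfalso
  apply hbd
  apply G.inj b hb hbv d hd hdv
  rw [← (on_vseg (G.pos b hb hbv) hx1 hxv).2.1, ← (on_vseg (G.pos d hd hdv) hx2 hxv).2.1]

lemma path_nc {S : Finset Pt} {v a b c d : Pt} (G : Good S v) (ha : a ∈ S) (hb : b ∈ S)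
    (hc : c ∈ S) (hd : d ∈ S) (hav : a ≠ v)
    (hbv : b ≠ v) (hcv : c ≠ v) (hdv : d ≠ v) (hab : th v a < th v b) (hcd : th v c < th v d)
    (hbc : th v b ≤ th v c) :
    NoCrossPair s(a, b) s(c, d) := by
  apply ncp_def
  intro x hx1 hx2
  have hYa := G.pos a ha hav
  have hYb := G.pos b hb hbv
  have hYc := G.pos c hc hcv
  have hYd := G.pos d hd hdv
  have hxp := Yc_pos_seg hYc hYd hx2
  obtain ⟨h1, h2, h3⟩ := on_seg hYa hYb hab hx1
  obtain ⟨h1', h2', h3'⟩ := on_seg hYc hYd hcd hx2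
  have e1 : th v x = th v b := by linarith
  have e2 : th v x = th v c := by linarith
  have hbc : b = c := G.inj b hb hbv c hc hcv (by linarith)
  have : x = b := pt_of_ths hxp hYb e1 (by rw [h3, e1, Lf_right hab])
  constructor
  · exact Or.inr this
  · exact Or.inl (this.trans hbc)

def Blocked (v : Pt) (E : Finset (Sym2 Pt)) (b : Pt) : Prop :=
  ∃ c d, s(c, d) ∈ E ∧ c ≠ v ∧ d ≠ v ∧ th v c < th v b ∧ th v b < th v d ∧
    sv v b < Lf v c d (th v b)

lemma th_ne {S : Finset Pt} {v : Pt} (G : Good S v) {a b : Pt} (ha : a ∈ S) (hb : b ∈ S)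
    (hav : a ≠ v) (hbv : b ≠ v) (hab : a ≠ b) : th v a < th v b ∨ th v b < th v a :=
  lt_or_gt_of_ne (fun h => hab (G.inj a ha hav b hb hbv h))

lemma vis_nc {S : Finset Pt} {v : Pt} (G : Good S v) {E : Finset (Sym2 Pt)} (hE : IsPST S E)
    {b : Pt} (hb : b ∈ S) (hbv : b ≠ v) (hvis : ¬ Blocked v E b) (f : Sym2 Pt) (hf : f ∈ E)
    (hfb : f ≠ s(v, b)) : NoCrossPair s(v, b) f := by
  induction f using Sym2.ind with
  | _ c d =>
  obtain ⟨hdiag, hmem⟩ := hE.1 _ hf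
  have hcd : c ≠ d := by simpa using hdiag
  have hc : c ∈ S := hmem c (by simp)
  have hd : d ∈ S := hmem d (by simp)
  by_cases hcv : c = v
  · subst hcv
    apply vv_nc G hb hd hbv hcd.symm
    rintro rfl; exact hfb rfl
  by_cases hdv : d = v
  · subst hdv
    rw [@Sym2.eq_swap _ c d]
    apply vv_nc G hb hc hbv hcd
    rintro rfl; exact hfb Sym2.eq_swap
  rcases th_ne G hc hd hcv hdv hcd with h | h
  · exact vseg_nc G hb hc hd hbv hcv hdv h
      (fun h' => hvis ⟨c, d, hf, hcv, hdv, h'.1, h'.2.1, h'.2.2⟩)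
  · rw [@Sym2.eq_swap _ c d] at hf ⊢
    exact vseg_nc G hb hd hc hbv hdv hcv h
      (fun h' => hvis ⟨d, c, hf, hdv, hcv, h'.1, h'.2.1, h'.2.2⟩)

lemma exists_visible {S : Finset Pt} {v : Pt} (G : Good S v) {E : Finset (Sym2 Pt)}
    (hE : IsPST S E) (hex : ∃ x y, s(x, y) ∈ E ∧ x ≠ v ∧ y ≠ v) :
    ∃ a b, s(a, b) ∈ E ∧ a ≠ v ∧ b ≠ v ∧ ¬ Blocked v E a ∧ ¬ Blocked v E b := by
  have hm : ∀ {x y}, s(x, y) ∈ E → x ∈ S ∧ y ∈ S ∧ x ≠ y := by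
    intro x y h
    obtain ⟨hdiag, hmem⟩ := hE.1 _ h
    exact ⟨hmem x (by simp), hmem y (by simp), by simpa using hdiag⟩
  let A := S.filter (fun a => a ≠ v ∧ ∃ b, s(a, b) ∈ E ∧ b ≠ v ∧ th v a < th v b)
  have hA : A.Nonempty := by
    obtain ⟨x, y, hxy, hx, hy⟩ := hex
    obtain ⟨hxS, hyS, hne⟩ := hm hxy
    rcases th_ne G hxS hyS hx hy hne with h | h
    · exact ⟨x, Finset.mem_filter.2 ⟨hxS, hx, y, hxy, hy, h⟩⟩
    · exact ⟨y, Finset.mem_filter.2 ⟨hyS, hy, x, by rwa [Sym2.eq_swap], hx, h⟩⟩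
  have hA2 : (A.filter (fun a => ¬ Blocked v E a)).Nonempty := by
    obtain ⟨a, haA, hmin⟩ := A.exists_min_image (th v) hA
    refine ⟨a, Finset.mem_filter.2 ⟨haA, ?_⟩⟩
    rintro ⟨c, d, hcd, hcv, hdv, h1, h2, h3⟩
    have := hmin c (Finset.mem_filter.2 ⟨(hm hcd).1, hcv, d, hcd, hdv, h1.trans h2⟩)
    linarith
  obtain ⟨a, haA, hmax⟩ := Finset.exists_max_image _ (th v) hA2
  obtain ⟨haA, hanb⟩ := Finset.mem_filter.1 haA
  obtain ⟨haS, hav, b0, hb0⟩ := Finset.mem_filter.1 haA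
  let B := S.filter (fun b => s(a, b) ∈ E ∧ b ≠ v ∧ th v a < th v b)
  have hB : B.Nonempty := ⟨b0, Finset.mem_filter.2 ⟨(hm hb0.1).2.1, hb0⟩⟩
  obtain ⟨b, hbB, hbmax⟩ := B.exists_max_image
    (fun b => (sv v b - sv v a) / (th v b - th v a)) hB
  obtain ⟨hbS, hab, hbv, habt⟩ := Finset.mem_filter.1 hbB
  refine ⟨a, b, hab, hav, hbv, hanb, ?_⟩
  let C := S.filter (fun c => c ≠ v ∧ th v a < th v c ∧
    ∃ d, s(c, d) ∈ E ∧ d ≠ v ∧ th v c < th v d ∧ th v c < th v b ∧ Lf v a b (th v c) < sv v c)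
  have H : ∀ c d x, s(c, d) ∈ E → c ≠ v → d ≠ v → th v c < x → x < th v d → th v a < x →
      x ≤ th v b → Lf v a b x < Lf v c d x → c ∈ C := by
    intro c d x hcd hcv hdv h1 h2 h3 h4 h5
    obtain ⟨hcS, hdS, hne⟩ := hm hcd
    have hcdt := h1.trans h2
    have nc : c ≠ a → NoCrossPair s(c, d) s(a, b) := by
      intro hca
      apply hE.2.1 _ hcd _ hab
      intro h
      rcases Sym2.eq_iff.1 h with h | h
      · exact hca h.1
      · rw [h.1, h.2] at hcdt; linarith
    have CL := fun hca t1 => @cross_lemma v c d a b (G.pos c hcS hcv) (G.pos d hdS hdv)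
      (G.pos a haS hav) (G.pos b hbS hbv) hcdt habt (nc hca) t1 x
    rcases lt_trichotomy (th v c) (th v a) with h | h | h
    · exfalso
      have hca : c ≠ a := by rintro rfl; exact lt_irrefl _ h
      refine hca (CL hca (th v a) h.le le_rfl h3 h2.le h4 ?_ h5)
      rw [Lf_left]
      by_contra hlt
      exact hanb ⟨c, d, hcd, hcv, hdv, h, h3.trans h2, not_le.1 hlt⟩
    · exfalso
      have := G.inj c hcS hcv a haS hav h
      subst this
      have := hbmax d (Finset.mem_filter.2 ⟨hdS, hcd, hdv, hcdt⟩)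
      unfold Lf at h5
      have := mul_le_mul_of_nonneg_right this (sub_nonneg.2 h3.le)
      linarith
    · refine Finset.mem_filter.2 ⟨hcS, hcv, h, d, hcd, hdv, hcdt, by linarith, ?_⟩
      by_contra hlt
      have hca : c ≠ a := by rintro rfl; exact lt_irrefl _ h
      refine hca (CL hca (th v c) le_rfl h.le h1 h2.le h4 ?_ h5)
      rw [Lf_left]
      exact not_lt.1 hlt
  rintro ⟨c, d, hcd, hcv, hdv, h1, h2, h3⟩
  have hC : C.Nonempty := ⟨c, H c d (th v b) hcd hcv hdv h1 h2 habt le_rfl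
    (by rwa [Lf_right habt])⟩
  obtain ⟨c0, hc0, hcmin⟩ := C.exists_min_image (th v) hC
  obtain ⟨hc0S, hc0v, hac0, d0, hc0d0, hd0v, h4, h5, h6⟩ := Finset.mem_filter.1 hc0
  have hbl : Blocked v E c0 := by
    by_contra hb
    have := hmax c0 (Finset.mem_filter.2 ⟨Finset.mem_filter.2 ⟨hc0S, hc0v, d0, hc0d0, hd0v, h4⟩, hb⟩)
    linarith
  obtain ⟨c', d', hcd', hcv', hdv', h1', h2', h3'⟩ := hbl
  have := hcmin c' (H c' d' (th v c0) hcd' hcv' hdv' h1' h2' hac0 h5.le (h6.trans h3'))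
  linarith

/-! ### Reachability -/

lemma ReachesIn.refl' {α : Type*} {step : α → α → Prop} (x : α) : ReachesIn step 0 x x :=
  ⟨0, le_rfl, fun _ => x, rfl, rfl, by simp⟩

lemma ReachesIn.mono' {α : Type*} {step : α → α → Prop} {m k : ℕ} {x y : α}
    (h : ReachesIn step m x y) (hmk : m ≤ k) : ReachesIn step k x y := by
  obtain ⟨i, hi, r⟩ := h
  exact ⟨i, hi.trans hmk, r⟩

lemma ReachesIn.trans' {α : Type*} {step : α → α → Prop} {m k : ℕ} {x y z : α}
    (h : ReachesIn step m x y) (h' : ReachesIn step k y z) : ReachesIn step (m + k) x z := by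
  obtain ⟨i, hi, f, hf0, hfi, hf⟩ := h
  obtain ⟨j, hj, g, hg0, hgj, hg⟩ := h'
  refine ⟨i + j, by omega, fun t => if t ≤ i then f t else g (t - i), by simp [hf0], ?_, ?_⟩
  · by_cases h : j = 0
    · subst h; simp [hfi, ← hgj, hg0]
    · simp [h, hgj]
  · intro t ht
    rcases lt_trichotomy t i with h | h | h
    · have h1 : t ≤ i := by omega
      have h2 : t + 1 ≤ i := by omega
      simp only [h1, h2, if_true]
      exact hf t h
    · subst h
      have h2 : ¬ (t + 1 ≤ t) := by omega
      simp only [le_refl, h2, if_true, if_false]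
      have := hg 0 (by omega)
      rw [hg0, ← hfi] at this
      simpa using this
    · have h1 : ¬ t ≤ i := by omega
      have h2 : ¬ t + 1 ≤ i := by omega
      simp only [h1, h2, if_false]
      have := hg (t - i) (by omega)
      have e : t + 1 - i = t - i + 1 := by omega
      rw [e]; exact this

lemma ReachesIn.single' {α : Type*} {step : α → α → Prop} {x y : α}
    (h : step x y) : ReachesIn step 1 x y :=
  ⟨1, le_rfl, fun t => if t = 0 then x else y, by simp, by simp, by
    intro i hi
    obtain rfl : i = 0 := by omega
    simpa using h⟩

lemma ReachesIn.symm' {α : Type*} {step : α → α → Prop} (hs : ∀ x y, step x y → step y x)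
    {m : ℕ} {x y : α} (h : ReachesIn step m x y) : ReachesIn step m y x := by
  obtain ⟨i, hi, f, hf0, hfi, hf⟩ := h
  refine ⟨i, hi, fun t => f (i - t), by simp [hfi], by simp [hf0], ?_⟩
  intro t ht
  apply hs
  have := hf (i - (t + 1)) (by omega)
  have e : i - (t + 1) + 1 = i - t := by omega
  rwa [e] at this

lemma labRotation_symm (S : Finset Pt) (T T' : LTree) (h : LabRotation S T T') :
    LabRotation S T' T := by
  obtain ⟨h1, h2, e1, e2, a, b, ⟨p, hp1, hp2⟩, c, d, e⟩ := h
  refine ⟨h2, h1, e2, e1, b, a, ⟨p, hp2, hp1⟩, ncp_symm c, d.symm, ?_⟩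
  intro x hx
  rw [Finset.inter_comm] at hx
  exact (e x hx).symm

/-! ### Exchange -/

abbrev Conn (E : Finset (Sym2 Pt)) (p q : Pt) : Prop :=
  Relation.ReflTransGen (fun a b => s(a, b) ∈ E) p q

lemma Conn.symm' {E : Finset (Sym2 Pt)} {p q : Pt} (h : Conn E p q) : Conn E q p := by
  have : Std.Symm (fun a b : Pt => s(a, b) ∈ E) := ⟨by
    intro a b h
    rwa [Sym2.eq_swap] at h⟩
  exact (Relation.ReflTransGen.stdSymm (r := fun a b : Pt => s(a, b) ∈ E)).symm _ _ h

lemma Conn.mono' {E F : Finset (Sym2 Pt)} (hEF : E ⊆ F) {p q : Pt} (h : Conn E p q) :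
    Conn F p q := Relation.ReflTransGen.mono (fun _ _ h => hEF h) _ _ h

lemma Conn.edge {E : Finset (Sym2 Pt)} {p q : Pt} (h : s(p, q) ∈ E) : Conn E p q :=
  Relation.ReflTransGen.single h

lemma Conn.edge' {E : Finset (Sym2 Pt)} {p q : Pt} (h : s(q, p) ∈ E) : Conn E p q :=
  Relation.ReflTransGen.single (by rwa [Sym2.eq_swap])

lemma Conn.replace {E F : Finset (Sym2 Pt)} {a b : Pt} (hEF : ∀ e ∈ E, e ≠ s(a, b) → e ∈ F)
    (hab : Conn F a b) {p q : Pt} (h : Conn E p q) : Conn F p q := by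
  induction h with
  | refl => exact Relation.ReflTransGen.refl
  | @tail c d _ h ih =>
    by_cases he : s(c, d) = s(a, b)
    · rcases Sym2.eq_iff.1 he with ⟨rfl, rfl⟩ | ⟨rfl, rfl⟩
      · exact ih.trans hab
      · exact ih.trans hab.symm'
    · exact ih.trans (Conn.edge (hEF _ h he))

lemma exchange_pst {S : Finset Pt} {E : Finset (Sym2 Pt)} (hE : IsPST S E) {a b : Pt}
    {g : Sym2 Pt} (he : s(a, b) ∈ E) (hg : g ∉ E) (hd : ¬ g.IsDiag) (hgS : ∀ p ∈ g, p ∈ S)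
    (hnc : ∀ f ∈ E, NoCrossPair g f) (hconn : Conn (insert g (E.erase s(a, b))) a b) :
    IsPST S (insert g (E.erase s(a, b))) := by
  refine ⟨?_, ?_, ?_, ?_⟩
  · intro f hf
    rcases Finset.mem_insert.1 hf with rfl | hf
    · exact ⟨hd, hgS⟩
    · exact hE.1 _ (Finset.mem_of_mem_erase hf)
  · intro f hf f' hf' hne
    rcases Finset.mem_insert.1 hf with rfl | hf <;> rcases Finset.mem_insert.1 hf' with rfl | hf'
    · exact absurd rfl hne
    · exact hnc _ (Finset.mem_of_mem_erase hf')
    · exact ncp_symm (hnc f (Finset.mem_of_mem_erase (by assumption)))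
    · exact hE.2.1 _ (Finset.mem_of_mem_erase hf) _ (Finset.mem_of_mem_erase hf') hne
  · rw [Finset.card_insert_of_notMem (fun h => hg (Finset.mem_of_mem_erase h)),
      Finset.card_erase_add_one he]
    exact hE.2.2.1
  · intro p hp q hq
    refine Conn.replace (a := a) (b := b) ?_ hconn (hE.2.2.2 p hp q hq)
    intro f hf hne
    exact Finset.mem_insert_of_mem (Finset.mem_erase.2 ⟨hne, hf⟩)

def mv (T : LTree) (e g : Sym2 Pt) : LTree :=
  (insert g (T.1.erase e), fun x => T.2 (Equiv.swap e g x))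

lemma mv_lab {S : Finset Pt} {T : LTree} (hT : IsLabeledPST S T) {e g : Sym2 Pt} (he : e ∈ T.1)
    (hg : g ∉ T.1) (hP : IsPST S (mv T e g).1) : IsLabeledPST S (mv T e g) := by
  have heg : e ≠ g := by rintro rfl; exact hg he
  refine ⟨hP, ?_, ?_⟩
  · refine Set.BijOn.comp (g := T.2) (f := Equiv.swap e g) hT.2.1 ?_
    refine ⟨?_, (Equiv.injective _).injOn, ?_⟩
    · intro x hx
      have hx' : x = g ∨ x ∈ T.1 ∧ ¬ x = e := by simpa [mv] using hx
      rcases hx' with rfl | ⟨h2, h1⟩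
      · simpa using he
      · rw [Equiv.swap_apply_of_ne_of_ne h1 (by rintro rfl; exact hg h2)]
        exact h2
    · intro x hx
      have hx : x ∈ T.1 := hx
      refine ⟨Equiv.swap e g x, ?_, by simp⟩
      by_cases h : x = e
      · subst h; simp [mv]
      · rw [Equiv.swap_apply_of_ne_of_ne h (by rintro rfl; exact hg hx)]
        simp [mv, h, hx]
  · intro x hx
    have hx' : x ≠ g ∧ (x ≠ e → x ∉ T.1) := by
      simpa [mv] using hx
    by_cases h : x = e
    · subst h; simpa [mv] using hT.2.2 _ hg
    · simp only [mv]
      rw [Equiv.swap_apply_of_ne_of_ne h hx'.1]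
      exact hT.2.2 _ (hx'.2 h)

lemma mv_new (T : LTree) (e g : Sym2 Pt) : (mv T e g).2 g = T.2 e := by simp [mv]
lemma mv_old (T : LTree) {e g x : Sym2 Pt} (h1 : x ≠ e) (h2 : x ≠ g) :
    (mv T e g).2 x = T.2 x := by
  simp [mv, Equiv.swap_apply_of_ne_of_ne h1 h2]

lemma rot_step {S : Finset Pt} {T : LTree} (hT : IsLabeledPST S T) {a b : Pt}
    {g : Sym2 Pt} (he : s(a, b) ∈ T.1) (hg : g ∉ T.1) (hd : ¬ g.IsDiag) (hgS : ∀ p ∈ g, p ∈ S)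
    (hnc : ∀ f ∈ T.1, NoCrossPair g f) (hconn : Conn (insert g (T.1.erase s(a, b))) a b)
    (hsh : ∃ p, p ∈ s(a, b) ∧ p ∈ g) :
    LabRotation S T (mv T s(a, b) g) := by
  have heg : s(a, b) ≠ g := by rintro rfl; exact hg he
  refine ⟨hT, mv_lab hT he hg (exchange_pst hT.1 he hg hd hgS hnc hconn), s(a, b), g, ?_, ?_,
    hsh, ncp_symm (hnc _ he), mv_new _ _ _, ?_⟩
  · ext x
    simp only [mv, Finset.mem_sdiff, Finset.mem_insert, Finset.mem_erase, Finset.mem_singleton]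
    constructor
    · rintro ⟨h1, h2⟩; by_contra h; exact h2 (Or.inr ⟨h, h1⟩)
    · rintro rfl; exact ⟨he, by simp [heg]⟩
  · ext x
    simp only [mv, Finset.mem_sdiff, Finset.mem_insert, Finset.mem_erase, Finset.mem_singleton]
    constructor
    · rintro ⟨h1 | h1, h2⟩
      · exact h1
      · exact absurd h1.2 h2
    · rintro rfl; exact ⟨by simp, hg⟩
  · intro x hx
    obtain ⟨h1, h2⟩ := Finset.mem_inter.1 hx
    have hxg : x ≠ g := by rintro rfl; exact hg h1
    refine mv_old T ?_ hxg
    rintro rfl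
    simp [mv, heg] at h2

lemma card_le_of_conn {S : Finset Pt} {E : Finset (Sym2 Pt)} (hS : S.Nonempty)
    (hE : ∀ e ∈ E, ¬ e.IsDiag ∧ ∀ p ∈ e, p ∈ S) (hc : ∀ p ∈ S, ∀ q ∈ S, Conn E p q) :
    S.card ≤ E.card + 1 := by
  let G : SimpleGraph S := SimpleGraph.fromRel (fun a b : S => s((a : Pt), (b : Pt)) ∈ E)
  have hadj : ∀ a b : S, s((a : Pt), (b : Pt)) ∈ E → G.Adj a b := by
    intro a b h
    rw [SimpleGraph.fromRel_adj]
    refine ⟨?_, Or.inl h⟩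
    rintro rfl
    exact (hE _ h).1 (by simp)
  have hreach : ∀ (p : S) (q : Pt), Conn E p q → ∃ hq : q ∈ S, G.Reachable p ⟨q, hq⟩ := by
    intro p q h
    induction h with
    | refl => exact ⟨p.2, SimpleGraph.Reachable.refl _⟩
    | @tail c d _ h ih =>
      obtain ⟨hcS, hr⟩ := ih
      have hdS : d ∈ S := (hE _ h).2 d (by simp)
      exact ⟨hdS, hr.trans (hadj ⟨c, hcS⟩ ⟨d, hdS⟩ h).reachable⟩
  have hG : G.Connected := by
    have : Nonempty S := hS.to_subtype
    refine ⟨fun p q => ?_⟩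
    exact (hreach p q (hc p p.2 q q.2)).2
  have h1 := hG.card_vert_le_card_edgeSet_add_one
  have h2 : Nat.card G.edgeSet ≤ E.card := by
    have hmem : ∀ e ∈ G.edgeSet, Sym2.map Subtype.val e ∈ E := by
      intro e he
      induction e using Sym2.ind with
      | _ a b =>
      rw [SimpleGraph.mem_edgeSet, SimpleGraph.fromRel_adj] at he
      rcases he.2 with h | h
      · exact h
      · rw [Sym2.eq_swap] at h; exact h
    have := Nat.card_le_card_of_injective
      (fun e : G.edgeSet => (⟨Sym2.map Subtype.val e.1, hmem e.1 e.2⟩ : E)) (by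
        intro x y h
        have h' := congrArg Subtype.val h
        exact Subtype.ext (Sym2.map.injective Subtype.val_injective h'))
    simpa using this
  rw [Nat.card_eq_fintype_card, Fintype.card_coe] at h1
  omega

lemma no_triangle {S : Finset Pt} {E : Finset (Sym2 Pt)} (hE : IsPST S E) {v a b : Pt}
    (hav : a ≠ v) (hbv : b ≠ v)
    (hab : s(a, b) ∈ E) (ha : s(v, a) ∈ E) (hb : s(v, b) ∈ E) : False := by
  have h := card_le_of_conn (S := S) (E := E.erase s(a, b)) ⟨a, (hE.1 _ hab).2 a (by simp)⟩
    (fun e he => hE.1 e (Finset.mem_of_mem_erase he)) (by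
      intro p hp q hq
      refine Conn.replace (a := a) (b := b) ?_ ?_ (hE.2.2.2 p hp q hq)
      · intro e he hne
        exact Finset.mem_erase.2 ⟨hne, he⟩
      · refine Relation.ReflTransGen.trans (Conn.edge' (p := a) (q := v) ?_) (Conn.edge ?_)
        · refine Finset.mem_erase.2 ⟨?_, ha⟩
          intro h
          rcases Sym2.eq_iff.1 h with h | h
          · exact hav h.1.symm
          · exact hbv h.1.symm
        · refine Finset.mem_erase.2 ⟨?_, hb⟩
          intro h
          rcases Sym2.eq_iff.1 h with h | h
          · exact hav h.1.symm
          · exact hbv h.1.symm)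
  have h1 := Finset.card_erase_add_one hab
  have h2 := hE.2.2.1
  omega

lemma last_edge {S : Finset Pt} {E : Finset (Sym2 Pt)} (hE : IsPST S E) {v u : Pt}
    (hv : v ∈ S) (hu : u ∈ S) (hne : u ≠ v) :
    ∃ u', s(u', u) ∈ E ∧ Conn (E.filter (fun e => u ∉ e)) v u' := by
  by_contra hcon
  push Not at hcon
  have : ∀ w, Conn E v w → w ≠ u ∧ Conn (E.filter (fun e => u ∉ e)) v w := by
    intro w h
    induction h with
    | refl => exact ⟨hne.symm, Relation.ReflTransGen.refl⟩
    | @tail c d _ h ih =>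
      have hd : d ≠ u := by
        rintro rfl
        exact hcon c h ih.2
      refine ⟨hd, ih.2.trans (Conn.edge (Finset.mem_filter.2 ⟨h, ?_⟩))⟩
      simp [ih.1.symm, hd.symm]
  exact (this u (hE.2.2.2 v hv u hu)).1 rfl

lemma star_step {S : Finset Pt} {v : Pt} (G : Good S v) {T : LTree}
    (hT : IsLabeledPST S T) (hns : ¬ starAt S v ⊆ T.1) :
    ∃ u ∈ S, u ≠ v ∧ s(v, u) ∉ T.1 ∧ ∃ u', u' ≠ v ∧ LabRotation S T (mv T s(u', u) s(v, u)) := by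
  have hm : ∀ {x y}, s(x, y) ∈ T.1 → x ∈ S ∧ y ∈ S ∧ x ≠ y := by
    intro x y h
    obtain ⟨hdiag, hmem⟩ := hT.1.1 _ h
    exact ⟨hmem x (by simp), hmem y (by simp), by simpa using hdiag⟩
  have key : ∃ u ∈ S, u ≠ v ∧ s(v, u) ∉ T.1 ∧ ¬ Blocked v T.1 u := by
    have hex : ∃ x y, s(x, y) ∈ T.1 ∧ x ≠ v ∧ y ≠ v := by
      obtain ⟨e, he, heT⟩ := Finset.not_subset.1 hns
      obtain ⟨u, hu, rfl⟩ := Finset.mem_image.1 he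
      obtain ⟨huv, huS⟩ := Finset.mem_erase.1 hu
      obtain ⟨u', hu', -⟩ := last_edge hT.1 G.mem huS huv
      refine ⟨u', u, hu', ?_, huv⟩
      rintro rfl
      exact heT hu'
    obtain ⟨a, b, hab, hav, hbv, ha, hb⟩ := exists_visible G hT.1 hex
    by_cases hva : s(v, a) ∈ T.1
    · refine ⟨b, (hm hab).2.1, hbv, ?_, hb⟩
      exact fun hvb => no_triangle hT.1 hav hbv hab hva hvb
    · exact ⟨a, (hm hab).1, hav, hva, ha⟩
  obtain ⟨u, huS, huv, hvu, hvis⟩ := key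
  obtain ⟨u', hu', hconn⟩ := last_edge hT.1 G.mem huS huv
  have hu'v : u' ≠ v := by rintro rfl; exact hvu hu'
  refine ⟨u, huS, huv, hvu, u', hu'v, rot_step hT hu' hvu (by simpa using huv.symm) ?_ ?_ ?_
    ⟨u, by simp, by simp⟩⟩
  · intro p hp
    rcases Sym2.mem_iff.1 hp with rfl | rfl
    · exact G.mem
    · exact huS
  · intro f hf
    exact vis_nc G hT.1 huS huv hvis f hf (by rintro rfl; exact hvu hf)
  · refine Relation.ReflTransGen.trans (Conn.symm' (Conn.mono' ?_ hconn)) (Conn.edge (by simp))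
    intro e he
    obtain ⟨h1, h2⟩ := Finset.mem_filter.1 he
    refine Finset.mem_insert_of_mem (Finset.mem_erase.2 ⟨?_, h1⟩)
    rintro rfl
    simp at h2

lemma star_card {S : Finset Pt} {v : Pt} (hv : v ∈ S) : (starAt S v).card + 1 = S.card := by
  unfold starAt
  rw [Finset.card_image_of_injOn, Finset.card_erase_add_one hv]
  intro x _ y _ h
  exact Sym2.congr_right.1 h

lemma to_star_aux {S : Finset Pt} {v : Pt} (G : Good S v) (k : ℕ) : ∀ T : LTree,
    IsLabeledPST S T → (starAt S v \ T.1).card ≤ k →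
    ∃ T1, IsLabeledPST S T1 ∧ T1.1 = starAt S v ∧ ReachesIn (LabRotation S) k T T1 := by
  induction k with
  | zero =>
    intro T hT hk
    have hsub : starAt S v ⊆ T.1 := by
      rw [← Finset.sdiff_eq_empty_iff_subset]
      exact Finset.card_eq_zero.1 (Nat.le_zero.1 hk)
    refine ⟨T, hT, (Finset.eq_of_subset_of_card_le hsub ?_).symm, ReachesIn.refl' _⟩
    have := star_card G.mem
    have := hT.1.2.2.1
    omega
  | succ k ih =>
    intro T hT hk
    by_cases hsub : starAt S v ⊆ T.1
    · obtain ⟨T1, h1, h2, h3⟩ := ih T hT (by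
        rw [Finset.sdiff_eq_empty_iff_subset.2 hsub]; simp)
      exact ⟨T1, h1, h2, h3.mono' (by omega)⟩
    · obtain ⟨u, huS, huv, hvu, u', hu'v, hrot⟩ := star_step G hT hsub
      obtain ⟨T1, h1, h2, h3⟩ := ih _ hrot.2.1 (by
        have : (starAt S v \ (mv T s(u', u) s(v, u)).1) ⊆ (starAt S v \ T.1).erase s(v, u) := by
          intro e he
          obtain ⟨he1, he2⟩ := Finset.mem_sdiff.1 he
          simp only [mv, Finset.mem_insert, Finset.mem_erase, not_or, not_and] at he2
          refine Finset.mem_erase.2 ⟨he2.1, Finset.mem_sdiff.2 ⟨he1, he2.2 ?_⟩⟩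
          rintro rfl
          obtain ⟨w, hw, hw'⟩ := Finset.mem_image.1 he1
          rcases Sym2.eq_iff.1 hw' with h | h
          · exact hu'v h.1.symm
          · exact huv h.1.symm
        have hmem : s(v, u) ∈ starAt S v \ T.1 := Finset.mem_sdiff.2
          ⟨Finset.mem_image.2 ⟨u, Finset.mem_erase.2 ⟨huv, huS⟩, rfl⟩, hvu⟩
        have h1 := Finset.card_le_card this
        have h2 := Finset.card_erase_add_one hmem
        omega)
      exact ⟨T1, h1, h2, ((ReachesIn.single' hrot).trans' h3).mono' (by omega)⟩

lemma to_star {S : Finset Pt} {v : Pt} (G : Good S v) (hS : 2 ≤ S.card) (T : LTree)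
    (hT : IsLabeledPST S T) :
    ∃ T1, IsLabeledPST S T1 ∧ T1.1 = starAt S v ∧ ReachesIn (LabRotation S) (S.card - 2) T T1 := by
  apply to_star_aux G _ T hT
  obtain ⟨u, huS, huv⟩ := Finset.exists_mem_ne (by omega : 1 < S.card) v
  obtain ⟨w, hw, -⟩ := last_edge hT.1 huS G.mem huv.symm
  obtain ⟨hd, hmem⟩ := hT.1.1 _ hw
  have hwv : w ≠ v := by simpa using hd
  have h1 : s(v, w) ∈ starAt S v := Finset.mem_image.2
    ⟨w, Finset.mem_erase.2 ⟨hwv, hmem w (by simp)⟩, rfl⟩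
  have h2 : starAt S v \ T.1 ⊆ (starAt S v).erase s(v, w) := by
    intro e he
    obtain ⟨he1, he2⟩ := Finset.mem_sdiff.1 he
    refine Finset.mem_erase.2 ⟨?_, he1⟩
    rintro rfl
    rw [Sym2.eq_swap] at he2
    exact he2 hw
  have h3 := Finset.card_le_card h2
  have h4 := Finset.card_erase_add_one h1
  have h5 := star_card G.mem
  omega

/-! ### The fan -/

structure Fan (S : Finset Pt) (v : Pt) (m : ℕ) (p : ℕ → Pt) : Prop where
  good : Good S v
  mem : ∀ i < m, p i ∈ S
  ne : ∀ i < m, p i ≠ v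
  mono : ∀ i j, i < j → j < m → th v (p i) < th v (p j)
  surj : ∀ x ∈ S, x ≠ v → ∃ i < m, p i = x
  card : m + 1 = S.card

lemma exists_fan {S : Finset Pt} {v : Pt} (G : Good S v) :
    ∃ p, Fan S v (S.card - 1) p := by
  have hpos : 0 < S.card := Finset.card_pos.2 ⟨v, G.mem⟩
  have hcard : ((S.erase v).image (th v)).card = S.card - 1 := by
    rw [Finset.card_image_of_injOn, Finset.card_erase_of_mem G.mem]
    intro x hx y hy h
    have hx := Finset.mem_erase.1 hx
    have hy := Finset.mem_erase.1 hy
    exact G.inj x hx.2 hx.1 y hy.2 hy.1 h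
  let o := ((S.erase v).image (th v)).orderEmbOfFin hcard
  have ho : ∀ i, ∃ x, x ∈ S ∧ x ≠ v ∧ th v x = o i := by
    intro i
    have := Finset.orderEmbOfFin_mem _ hcard i
    obtain ⟨x, hx, hx'⟩ := Finset.mem_image.1 this
    have hx := Finset.mem_erase.1 hx
    exact ⟨x, hx.2, hx.1, hx'⟩
  choose f hf1 hf2 hf3 using ho
  refine ⟨fun i => if h : i < S.card - 1 then f ⟨i, h⟩ else v, G, ?_, ?_, ?_, ?_, by omega⟩
  · intro i hi; simp only [hi, dif_pos]; exact hf1 _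
  · intro i hi; simp only [hi, dif_pos]; exact hf2 _
  · intro i j hij hj
    have hi : i < S.card - 1 := by omega
    simp only [hi, hj, dif_pos, hf3]
    exact o.strictMono hij
  · intro x hx hxv
    have : th v x ∈ Set.range o := by
      rw [Finset.range_orderEmbOfFin]
      exact Finset.mem_coe.2 (Finset.mem_image_of_mem _ (Finset.mem_erase.2 ⟨hxv, hx⟩))
    obtain ⟨i, hi⟩ := this
    refine ⟨i, i.2, ?_⟩
    simp only [i.2, dif_pos]
    exact G.inj _ (hf1 _) (hf2 _) _ hx hxv ((hf3 i).trans hi)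

def rE (v : Pt) (p : ℕ → Pt) (i : ℕ) : Sym2 Pt := s(v, p i)
def qE (p : ℕ → Pt) (i : ℕ) : Sym2 Pt := s(p i, p (i + 1))

def InF (v : Pt) (m : ℕ) (p : ℕ → Pt) (e : Sym2 Pt) : Prop :=
  (∃ i < m, e = rE v p i) ∨ ∃ i, i + 1 < m ∧ e = qE p i

section fan
variable {S : Finset Pt} {v : Pt} {m : ℕ} {p : ℕ → Pt}

lemma Fan.inj (F : Fan S v m p) {i j : ℕ} (hi : i < m) (hj : j < m) (h : p i = p j) : i = j := by
  rcases lt_trichotomy i j with h' | h' | h'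
  · have := F.mono i j h' hj
    rw [h] at this; exact absurd this (lt_irrefl _)
  · exact h'
  · have := F.mono j i h' hi
    rw [h] at this; exact absurd this (lt_irrefl _)

lemma Fan.mono_le (F : Fan S v m p) {i j : ℕ} (hij : i ≤ j) (hj : j < m) :
    th v (p i) ≤ th v (p j) := by
  rcases hij.eq_or_lt with rfl | h
  · exact le_rfl
  · exact (F.mono i j h hj).le

lemma Fan.r_inj (F : Fan S v m p) {i j : ℕ} (hi : i < m) (hj : j < m)
    (h : rE v p i = rE v p j) : i = j := F.inj hi hj (Sym2.congr_right.1 h)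

lemma Fan.q_inj (F : Fan S v m p) {i j : ℕ} (hi : i + 1 < m) (hj : j + 1 < m)
    (h : qE p i = qE p j) : i = j := by
  rcases Sym2.eq_iff.1 h with h | h
  · exact F.inj (by omega) (by omega) h.1
  · have h1 := F.inj (by omega) (by omega) h.1
    have h2 := F.inj (by omega) (by omega) h.2
    omega

lemma Fan.r_ne_q (F : Fan S v m p) {i j : ℕ} (hj : j + 1 < m) :
    rE v p i ≠ qE p j := by
  intro h
  rcases Sym2.eq_iff.1 h with h | h
  · exact F.ne j (by omega) h.1.symm
  · exact F.ne (j + 1) (by omega) h.1.symm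

lemma Fan.rq_nc (F : Fan S v m p) {i j : ℕ} (hi : i < m) (hj : j + 1 < m) :
    NoCrossPair (rE v p i) (qE p j) := by
  apply vseg_nc F.good (F.mem i hi) (F.mem j (by omega)) (F.mem (j + 1) hj) (F.ne i hi)
    (F.ne j (by omega)) (F.ne (j + 1) hj) (F.mono _ _ (by omega) hj)
  rintro ⟨h1, h2, -⟩
  rcases le_or_gt i j with h | h
  · have := F.mono_le h (by omega); linarith
  · have := F.mono_le (show j + 1 ≤ i from h) hi; linarith

lemma Fan.qq_nc (F : Fan S v m p) {i j : ℕ} (hij : i < j) (hj : j + 1 < m) :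
    NoCrossPair (qE p i) (qE p j) :=
  path_nc F.good (F.mem i (by omega)) (F.mem (i + 1) (by omega)) (F.mem j (by omega))
    (F.mem (j + 1) hj) (F.ne i (by omega)) (F.ne (i + 1) (by omega)) (F.ne j (by omega))
    (F.ne (j + 1) hj) (F.mono _ _ (by omega) (by omega)) (F.mono _ _ (by omega) hj)
    (F.mono_le hij (by omega))

lemma Fan.nc (F : Fan S v m p) {e f : Sym2 Pt} (he : InF v m p e) (hf : InF v m p f)
    (hne : e ≠ f) : NoCrossPair e f := by
  rcases he with ⟨i, hi, rfl⟩ | ⟨i, hi, rfl⟩ <;> rcases hf with ⟨j, hj, rfl⟩ | ⟨j, hj, rfl⟩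
  · apply vv_nc F.good (F.mem i hi) (F.mem j hj) (F.ne i hi) (F.ne j hj)
    intro h
    exact hne (by unfold rE; rw [h])
  · exact F.rq_nc hi hj
  · exact ncp_symm (F.rq_nc hj hi)
  · rcases lt_trichotomy i j with h | h | h
    · exact F.qq_nc h hj
    · subst h; exact absurd rfl hne
    · exact ncp_symm (F.qq_nc h hi)

lemma Fan.valid (F : Fan S v m p) {e : Sym2 Pt} (he : InF v m p e) :
    ¬ e.IsDiag ∧ ∀ x ∈ e, x ∈ S := by
  rcases he with ⟨i, hi, rfl⟩ | ⟨i, hi, rfl⟩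
  · refine ⟨by simpa [rE] using (F.ne i hi).symm, ?_⟩
    intro x hx
    rcases Sym2.mem_iff.1 hx with rfl | rfl
    · exact F.good.mem
    · exact F.mem i hi
  · refine ⟨?_, ?_⟩
    · have : p i ≠ p (i + 1) := fun h => by
        have := F.inj (by omega) hi h; omega
      simpa [qE] using this
    intro x hx
    rcases Sym2.mem_iff.1 hx with rfl | rfl
    · exact F.mem i (by omega)
    · exact F.mem _ hi

lemma Fan.rot (F : Fan S v m p) {T : LTree} (hT : IsLabeledPST S T)
    (hTF : ∀ f ∈ T.1, InF v m p f) {a b : Pt} {g : Sym2 Pt} (he : s(a, b) ∈ T.1)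
    (hgF : InF v m p g) (hg : g ∉ T.1) (hconn : Conn (insert g (T.1.erase s(a, b))) a b)
    (hsh : ∃ x, x ∈ s(a, b) ∧ x ∈ g) : LabRotation S T (mv T s(a, b) g) :=
  rot_step hT he hg (F.valid hgF).1 (F.valid hgF).2
    (fun f hf => F.nc hgF (hTF f hf) (by rintro rfl; exact hg hf)) hconn hsh

/-! ### From the star to the comb -/

def Tk (v : Pt) (m : ℕ) (p : ℕ → Pt) (k : ℕ) : Finset (Sym2 Pt) :=
  (Finset.range k).image (qE p) ∪ (Finset.Ico k m).image (rE v p)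

def Qs (m : ℕ) (p : ℕ → Pt) : Finset (Sym2 Pt) := (Finset.range (m - 1)).image (qE p)

def comb (v : Pt) (m : ℕ) (p : ℕ → Pt) (j : ℕ) : Finset (Sym2 Pt) := insert (rE v p j) (Qs m p)

lemma mem_Tk {k : ℕ} {x : Sym2 Pt} : x ∈ Tk v m p k ↔
    (∃ i < k, x = qE p i) ∨ ∃ i, k ≤ i ∧ i < m ∧ x = rE v p i := by
  simp only [Tk, Finset.mem_union, Finset.mem_image, Finset.mem_range, Finset.mem_Ico]
  constructor
  · rintro (⟨i, h, rfl⟩ | ⟨i, h, rfl⟩)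
    · exact Or.inl ⟨i, h, rfl⟩
    · exact Or.inr ⟨i, h.1, h.2, rfl⟩
  · rintro (⟨i, h, rfl⟩ | ⟨i, h, h', rfl⟩)
    · exact Or.inl ⟨i, h, rfl⟩
    · exact Or.inr ⟨i, ⟨h, h'⟩, rfl⟩

lemma mem_Qs {x : Sym2 Pt} : x ∈ Qs m p ↔ ∃ i, i + 1 < m ∧ x = qE p i := by
  simp only [Qs, Finset.mem_image, Finset.mem_range]
  constructor
  · rintro ⟨i, h, rfl⟩; exact ⟨i, by omega, rfl⟩
  · rintro ⟨i, h, rfl⟩; exact ⟨i, by omega, rfl⟩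

lemma Fan.r_notMem_Qs (F : Fan S v m p) (i : ℕ) : rE v p i ∉ Qs m p := by
  intro h
  obtain ⟨j, hj, h⟩ := mem_Qs.1 h
  exact F.r_ne_q hj h

lemma Fan.star_eq (F : Fan S v m p) : starAt S v = Tk v m p 0 := by
  ext x
  rw [mem_Tk]
  constructor
  · intro h
    obtain ⟨w, hw, rfl⟩ := Finset.mem_image.1 h
    obtain ⟨hwv, hwS⟩ := Finset.mem_erase.1 hw
    obtain ⟨i, hi, rfl⟩ := F.surj w hwS hwv
    exact Or.inr ⟨i, by omega, hi, rfl⟩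
  · rintro (⟨i, h, rfl⟩ | ⟨i, h, h', rfl⟩)
    · omega
    · exact Finset.mem_image.2 ⟨p i, Finset.mem_erase.2 ⟨F.ne i h', F.mem i h'⟩, rfl⟩

lemma Fan.to_comb (F : Fan S v m p) (T : LTree) (hT : IsLabeledPST S T)
    (hTs : T.1 = starAt S v) : ∀ k, k + 1 ≤ m →
    ∃ T1, IsLabeledPST S T1 ∧ T1.1 = Tk v m p k ∧ ReachesIn (LabRotation S) k T T1 := by
  intro k
  induction k with
  | zero => exact fun _ => ⟨T, hT, hTs.trans F.star_eq, ReachesIn.refl' _⟩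
  | succ k ih =>
    intro hk
    obtain ⟨T1, hT1, hE, hR⟩ := ih (by omega)
    have hrm : s(v, p k) ∈ T1.1 := by
      rw [hE, mem_Tk]; exact Or.inr ⟨k, le_rfl, by omega, rfl⟩
    have hq : qE p k ∉ T1.1 := by
      rw [hE, mem_Tk]
      rintro (⟨i, h, h'⟩ | ⟨i, h, h', h''⟩)
      · have := F.q_inj (by omega) (by omega) h'
        omega
      · exact F.r_ne_q (by omega) h''.symm
    have hrot := F.rot (g := qE p k) hT1 (by
      intro f hf
      rw [hE, mem_Tk] at hf
      rcases hf with ⟨i, h, rfl⟩ | ⟨i, h, h', rfl⟩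
      · exact Or.inr ⟨i, by omega, rfl⟩
      · exact Or.inl ⟨i, h', rfl⟩) hrm (Or.inr ⟨k, by omega, rfl⟩) hq (by
      refine Relation.ReflTransGen.trans (Conn.edge (p := v) (q := p (k + 1)) ?_) (Conn.edge' ?_)
      · refine Finset.mem_insert_of_mem (Finset.mem_erase.2 ⟨?_, ?_⟩)
        · intro h
          have := F.r_inj (i := k + 1) (j := k) (by omega) (by omega) h
          omega
        · rw [hE, mem_Tk]; exact Or.inr ⟨k + 1, by omega, by omega, rfl⟩
      · exact Finset.mem_insert_self _ _) ⟨p k, by simp, by simp [qE]⟩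
    refine ⟨_, hrot.2.1, ?_, hR.trans' (ReachesIn.single' hrot)⟩
    ext x
    simp only [mv, hE, Finset.mem_insert, Finset.mem_erase, mem_Tk]
    constructor
    · rintro (rfl | ⟨h1, ⟨i, h, rfl⟩ | ⟨i, h, h', rfl⟩⟩)
      · exact Or.inl ⟨k, by omega, rfl⟩
      · exact Or.inl ⟨i, by omega, rfl⟩
      · refine Or.inr ⟨i, ?_, h', rfl⟩
        rcases h.eq_or_lt with h2 | h2
        · subst h2; exact absurd rfl h1
        · exact h2
    · rintro (⟨i, h, rfl⟩ | ⟨i, h, h', rfl⟩)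
      · rcases (Nat.lt_succ_iff.1 h).eq_or_lt with h2 | h2
        · subst h2; exact Or.inl rfl
        · exact Or.inr ⟨fun h3 => F.r_ne_q (i := k) (j := i) (by omega) h3.symm, Or.inl ⟨i, h2, rfl⟩⟩
      · refine Or.inr ⟨fun h3 => ?_, Or.inr ⟨i, by omega, h', rfl⟩⟩
        have := F.r_inj (i := i) (j := k) (by omega) (by omega) h3
        omega

lemma Fan.Tk_last (_F : Fan S v m p) (hm : 1 ≤ m) : Tk v m p (m - 1) = comb v m p (m - 1) := by
  ext x
  simp only [comb, Finset.mem_insert, mem_Tk, mem_Qs]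
  constructor
  · rintro (⟨i, h, rfl⟩ | ⟨i, h, h', rfl⟩)
    · exact Or.inr ⟨i, by omega, rfl⟩
    · obtain rfl : i = m - 1 := by omega
      exact Or.inl rfl
  · rintro (rfl | ⟨i, h, rfl⟩)
    · exact Or.inr ⟨m - 1, le_rfl, by omega, rfl⟩
    · exact Or.inl ⟨i, by omega, rfl⟩

/-! ### Moves on the comb -/

lemma path_conn {E : Finset (Sym2 Pt)} (hQ : Qs m p ⊆ E) : ∀ i, i < m → Conn E (p 0) (p i) := by
  intro i
  induction i with
  | zero => exact fun _ => Relation.ReflTransGen.refl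
  | succ i ih =>
    intro hi
    exact (ih (by omega)).trans (Conn.edge (hQ (mem_Qs.2 ⟨i, hi, rfl⟩)))

lemma Fan.comb_inF (_F : Fan S v m p) {j : ℕ} (hj : j < m) :
    ∀ f ∈ comb v m p j, InF v m p f := by
  intro f hf
  rcases Finset.mem_insert.1 hf with rfl | h
  · exact Or.inl ⟨j, hj, rfl⟩
  · obtain ⟨i, hi, rfl⟩ := mem_Qs.1 h
    exact Or.inr ⟨i, hi, rfl⟩

lemma Fan.comb_shift (F : Fan S v m p) {T : LTree} (hT : IsLabeledPST S T) {i j : ℕ}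
    (hj : j < m) (hi : i < m) (hE : T.1 = comb v m p j) :
    ∃ T1, IsLabeledPST S T1 ∧ T1.1 = comb v m p i ∧
      ReachesIn (LabRotation S) (if i = j then 0 else 1) T T1 ∧
      T1.2 (rE v p i) = T.2 (rE v p j) ∧ ∀ k, k + 1 < m → T1.2 (qE p k) = T.2 (qE p k) := by
  by_cases hij : i = j
  · subst hij
    exact ⟨T, hT, hE, by simpa using ReachesIn.refl' _, rfl, fun _ _ => rfl⟩
  have hnot : rE v p i ∉ T.1 := by
    rw [hE]
    intro h
    rcases Finset.mem_insert.1 h with h | h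
    · exact hij (F.r_inj hi hj h)
    · exact F.r_notMem_Qs _ h
  have hset : (T.1.erase s(v, p j)) = Qs m p := by
    rw [hE]
    exact Finset.erase_insert (F.r_notMem_Qs j)
  have hrot := F.rot (g := rE v p i) hT (by rw [hE]; exact F.comb_inF hj)
    (a := v) (b := p j) (by rw [hE]; exact Finset.mem_insert_self _ _) (Or.inl ⟨i, hi, rfl⟩) hnot (by
      rw [hset]
      refine Relation.ReflTransGen.trans (Conn.edge (p := v) (q := p i)
        (Finset.mem_insert_self _ _)) ?_
      exact (path_conn (Finset.subset_insert _ _) i hi).symm'.trans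
        (path_conn (Finset.subset_insert _ _) j hj)) ⟨v, by simp, by simp [rE]⟩
  refine ⟨_, hrot.2.1, ?_, ?_, mv_new _ _ _, ?_⟩
  · simp only [mv]; rw [hset]; rfl
  · simpa [hij] using ReachesIn.single' hrot
  · intro k hk
    exact mv_old _ (F.r_ne_q (i := j) hk).symm (F.r_ne_q hk).symm

lemma Fan.comb_swap0 (F : Fan S v m p) {T : LTree} (hT : IsLabeledPST S T) {i : ℕ}
    (hi : i + 1 < m) (hE : T.1 = comb v m p i) :
    ∃ T1, IsLabeledPST S T1 ∧ T1.1 = comb v m p (i + 1) ∧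
      ReachesIn (LabRotation S) 2 T T1 ∧
      T1.2 (rE v p (i + 1)) = T.2 (qE p i) ∧ T1.2 (qE p i) = T.2 (rE v p i) ∧
      ∀ k, k + 1 < m → k ≠ i → T1.2 (qE p k) = T.2 (qE p k) := by
  have hrr : rE v p (i + 1) ≠ rE v p i := fun h => by
    have := F.r_inj hi (by omega) h; omega
  have hnot : rE v p (i + 1) ∉ T.1 := by
    rw [hE]
    intro h
    rcases Finset.mem_insert.1 h with h | h
    · exact hrr h
    · exact F.r_notMem_Qs _ h
  have hrq : ∀ j, rE v p j ≠ qE p i := fun j => F.r_ne_q hi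
  have hrot := F.rot (g := rE v p (i + 1)) hT (by rw [hE]; exact F.comb_inF (by omega))
    (a := p i) (b := p (i + 1))
    (by rw [hE]; exact Finset.mem_insert_of_mem (mem_Qs.2 ⟨i, hi, rfl⟩))
    (Or.inl ⟨i + 1, hi, rfl⟩) hnot (by
      refine Relation.ReflTransGen.trans (Conn.edge' (p := p i) (q := v) ?_)
        (Conn.edge (Finset.mem_insert_self _ _))
      refine Finset.mem_insert_of_mem (Finset.mem_erase.2 ⟨hrq i, ?_⟩)
      rw [hE]; exact Finset.mem_insert_self _ _) ⟨p (i + 1), by simp, by simp [rE]⟩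
  change LabRotation S T (mv T (qE p i) (rE v p (i + 1))) at hrot
  have hE2 : (mv T (qE p i) (rE v p (i + 1))).1 =
    insert (rE v p (i + 1)) ((comb v m p i).erase (qE p i)) := by simp only [mv, hE]
  have hrot2 := F.rot (g := qE p i) hrot.2.1 (by
      rw [hE2]
      intro f hf
      rcases Finset.mem_insert.1 hf with rfl | h
      · exact Or.inl ⟨i + 1, hi, rfl⟩
      · exact F.comb_inF (by omega) f (Finset.mem_of_mem_erase h))
    (a := v) (b := p i)
    (by
      rw [hE2]
      exact Finset.mem_insert_of_mem (Finset.mem_erase.2 ⟨hrq i, Finset.mem_insert_self _ _⟩))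
    (Or.inr ⟨i, hi, rfl⟩) (by
      rw [hE2]
      intro h
      rcases Finset.mem_insert.1 h with h | h
      · exact hrq _ h.symm
      · exact (Finset.mem_erase.1 h).1 rfl) (by
      refine Relation.ReflTransGen.trans (Conn.edge (p := v) (q := p (i + 1)) ?_)
        (Conn.edge' (Finset.mem_insert_self _ _))
      rw [hE2]
      exact Finset.mem_insert_of_mem (Finset.mem_erase.2 ⟨hrr, Finset.mem_insert_self _ _⟩))
      ⟨p i, by simp, by simp [qE]⟩
  change LabRotation S _ (mv _ (rE v p i) (qE p i)) at hrot2
  refine ⟨_, hrot2.2.1, ?_, (ReachesIn.single' hrot).trans' (ReachesIn.single' hrot2), ?_, ?_, ?_⟩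
  · have : ∀ T' : LTree, (mv T' (rE v p i) (qE p i)).1 = insert (qE p i) (T'.1.erase (rE v p i)) :=
      fun _ => rfl
    rw [this, hE2]
    have hq : qE p i ∈ Qs m p := mem_Qs.2 ⟨i, hi, rfl⟩
    have hr := F.r_notMem_Qs i
    ext x
    simp only [comb, Finset.mem_insert, Finset.mem_erase]
    constructor
    · rintro (rfl | ⟨h1, rfl | ⟨h2, rfl | h3⟩⟩)
      · exact Or.inr hq
      · exact Or.inl rfl
      · exact absurd rfl h1
      · exact Or.inr h3
    · rintro (rfl | h)
      · exact Or.inr ⟨hrr, Or.inl rfl⟩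
      · by_cases hx : x = qE p i
        · exact Or.inl hx
        · exact Or.inr ⟨by rintro rfl; exact hr h, Or.inr ⟨hx, Or.inr h⟩⟩
  · rw [mv_old _ hrr (hrq _), mv_new]
  · rw [mv_new, mv_old _ (hrq i) hrr.symm]
  · intro k hk hki
    have h1 : qE p k ≠ qE p i := fun h => hki (F.q_inj hk hi h)
    rw [mv_old _ (F.r_ne_q hk).symm h1, mv_old _ h1 (F.r_ne_q hk).symm]

lemma Fan.comb_swap (F : Fan S v m p) {T : LTree} (hT : IsLabeledPST S T) {i j : ℕ}
    (hj : j < m) (hi : i + 1 < m) (hE : T.1 = comb v m p j) :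
    ∃ T1, IsLabeledPST S T1 ∧ T1.1 = comb v m p (i + 1) ∧
      ReachesIn (LabRotation S) 3 T T1 ∧
      T1.2 (rE v p (i + 1)) = T.2 (qE p i) ∧ T1.2 (qE p i) = T.2 (rE v p j) ∧
      ∀ k, k + 1 < m → k ≠ i → T1.2 (qE p k) = T.2 (qE p k) := by
  obtain ⟨T1, h1, h2, h3, h4, h5⟩ := F.comb_shift hT hj (show i < m by omega) hE
  obtain ⟨T2, g1, g2, g3, g4, g5, g6⟩ := F.comb_swap0 h1 hi h2
  refine ⟨T2, g1, g2, (h3.trans' g3).mono' (by split_ifs <;> omega), ?_, ?_, ?_⟩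
  · rw [g4, h5 i hi]
  · rw [g5, h4]
  · intro k hk hki
    rw [g6 k hk hki, h5 k hk]

lemma Fan.sort_aux (F : Fan S v m p) {T T' : LTree} (hT : IsLabeledPST S T)
    (hT' : IsLabeledPST S T') {j j' : ℕ} (hj : j < m) (hE : T.1 = comb v m p j)
    (hE' : T'.1 = comb v m p j') : ∀ k, k + 1 ≤ m →
    ∃ T1 j1, IsLabeledPST S T1 ∧ j1 < m ∧ T1.1 = comb v m p j1 ∧
      ReachesIn (LabRotation S) (6 * k) T T1 ∧ ∀ i < k, T1.2 (qE p i) = T'.2 (qE p i) := by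
  intro k
  induction k with
  | zero => exact fun _ => ⟨T, j, hT, hj, hE, ReachesIn.refl' _, by simp⟩
  | succ k ih =>
    intro hk
    obtain ⟨T1, j1, h1, h2, h3, h4, h5⟩ := ih (by omega)
    have hqm' : ∀ i, i + 1 < m → qE p i ∈ T'.1 := by
      intro i hi
      rw [hE']; exact Finset.mem_insert_of_mem (mem_Qs.2 ⟨i, hi, rfl⟩)
    obtain ⟨e, he, hle⟩ := h1.2.1.surjOn (hT'.2.1.mapsTo (hqm' k (by omega)))
    have he : e ∈ T1.1 := he
    rw [h3] at he
    rcases Finset.mem_insert.1 he with rfl | he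
    · obtain ⟨T2, g1, g2, g3, g4, g5, g6⟩ := F.comb_swap h1 h2 (show k + 1 < m by omega) h3
      refine ⟨T2, k + 1, g1, by omega, g2, (h4.trans' g3).mono' (by omega), ?_⟩
      intro i hi
      by_cases hik : i = k
      · subst hik; rw [g5, hle]
      · rw [g6 i (by omega) hik, h5 i (by omega)]
    · obtain ⟨i, hi, rfl⟩ := mem_Qs.1 he
      have hki : k ≤ i := by
        by_contra hlt
        rw [h5 i (by omega)] at hle
        have := F.q_inj hi (by omega) (hT'.2.1.injOn (hqm' i hi) (hqm' k (by omega)) hle)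
        omega
      by_cases hik : i = k
      · subst hik
        refine ⟨T1, j1, h1, h2, h3, h4.mono' (by omega), ?_⟩
        intro l hl
        by_cases hlk : l = i
        · subst hlk; exact hle
        · exact h5 l (by omega)
      · obtain ⟨T2, g1, g2, g3, g4, g5, g6⟩ := F.comb_swap h1 h2 hi h3
        obtain ⟨T3, f1, f2, f3, f4, f5, f6⟩ := F.comb_swap g1 hi (show k + 1 < m by omega) g2
        refine ⟨T3, k + 1, f1, by omega, f2, ((h4.trans' g3).trans' f3).mono' (by omega), ?_⟩
        intro l hl
        by_cases hlk : l = k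
        · subst hlk; rw [f5, g4, hle]
        · rw [f6 l (by omega) hlk, g6 l (by omega) (by omega), h5 l (by omega)]

lemma Fan.sort (F : Fan S v m p) {T T' : LTree} (hT : IsLabeledPST S T)
    (hT' : IsLabeledPST S T') {j j' : ℕ} (hj : j < m) (hj' : j' < m) (hE : T.1 = comb v m p j)
    (hE' : T'.1 = comb v m p j') : ReachesIn (LabRotation S) (7 * (m - 1)) T T' := by
  obtain ⟨T1, j1, h1, h2, h3, h4, h5⟩ := F.sort_aux hT hT' hj hE hE' (m - 1) (by omega)
  obtain ⟨T2, g1, g2, g3, g4, g5⟩ := F.comb_shift h1 h2 hj' h3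
  have hq : ∀ i, i + 1 < m → T2.2 (qE p i) = T'.2 (qE p i) := by
    intro i hi
    rw [g5 i hi, h5 i (by omega)]
  have hr : T2.2 (rE v p j') = T'.2 (rE v p j') := by
    have hmem : rE v p j' ∈ T2.1 := by rw [g2]; exact Finset.mem_insert_self _ _
    obtain ⟨e, he, hle⟩ := hT'.2.1.surjOn (g1.2.1.mapsTo hmem)
    have he : e ∈ T'.1 := he
    rw [hE'] at he
    rcases Finset.mem_insert.1 he with rfl | he
    · exact hle.symm
    · exfalso
      obtain ⟨i, hi, rfl⟩ := mem_Qs.1 he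
      rw [← hq i hi] at hle
      have hm2 : qE p i ∈ T2.1 := by
        rw [g2]; exact Finset.mem_insert_of_mem (mem_Qs.2 ⟨i, hi, rfl⟩)
      exact F.r_ne_q hi (g1.2.1.injOn hm2 hmem hle).symm
  have hEq : T2 = T' := by
    have hE2 : T2.1 = T'.1 := g2.trans hE'.symm
    refine Prod.ext hE2 (funext fun e => ?_)
    by_cases he : e ∈ T2.1
    · rw [g2] at he
      rcases Finset.mem_insert.1 he with rfl | he
      · exact hr
      · obtain ⟨i, hi, rfl⟩ := mem_Qs.1 he
        exact hq i hi
    · rw [g1.2.2 e he, hT'.2.2 e (by rwa [← hE2])]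
  subst hEq
  exact (h4.trans' g3).mono' (by split_ifs <;> omega)

lemma Fan.reach_comb (F : Fan S v m p) (hm : 1 ≤ m) {T : LTree} (hT : IsLabeledPST S T) :
    ∃ T1, IsLabeledPST S T1 ∧ T1.1 = comb v m p (m - 1) ∧
      ReachesIn (LabRotation S) (2 * (m - 1)) T T1 := by
  have hc := F.card
  obtain ⟨T1, h1, h2, h3⟩ := to_star F.good (by omega) T hT
  obtain ⟨T2, g1, g2, g3⟩ := F.to_comb T1 h1 h2 (m - 1) (by omega)
  exact ⟨T2, g1, g2.trans (F.Tk_last hm), (h3.trans' g3).mono' (by omega)⟩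

end fan

/-- on `n ≥ 2` points in general position, any two edge-labeled trees are
connected by at most `11n - 22` rotations. -/
theorem stmt_18 :
    ∀ S : Finset Pt, 2 ≤ S.card → GenPos S →
      ∀ T T' : LTree, IsLabeledPST S T → IsLabeledPST S T' →
        ReachesIn (LabRotation S) (11 * S.card - 22) T T' := by
  intro S hS gp T T' hT hT'
  obtain ⟨v, G⟩ := exists_good S (Finset.card_pos.1 (by omega)) gp
  obtain ⟨p, F⟩ := exists_fan G
  obtain ⟨T1, h1, h2, h3⟩ := F.reach_comb (by omega) hT
  obtain ⟨T2, g1, g2, g3⟩ := F.reach_comb (by omega) hT'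
  have hs := F.sort h1 g1 (by omega) (by omega) h2 g2
  exact ((h3.trans' hs).trans' (g3.symm' (labRotation_symm S))).mono' (by omega)
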